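/- Let n be an integer, A ⊆ C([n],2), d a sequence of nonnegative integers of length n, and a, v ∈ [n] with {a,v} ∈ A. If N_{av}(d) > 0, then P_{av}(d) = d_v · ( Σ_{b ∈ A*(v)} R_{ba}(d − e_v) · (1 − P_{bv}(d − e_b − e_v)) / (1 − P_{av}(d − e_a − e_v)) )^{−1}, where A*(v) = {b ∈ A(v) : N_{bv}(d) > 0}; in particular all quantities appearing on the right-hand side are well defined and the summation is nonzero. -/

import Mathlib

open Finset

noncomputable section

/-- Simple graphs on vertex set `[n]`, encoded as finsets of non-diagonal unordered pairs. -/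
def Graphs (n : ℕ) : Finset (Finset (Sym2 (Fin n))) :=
  Finset.univ.filter (fun E => ∀ e ∈ E, ¬ e.IsDiag)

/-- Degree of vertex `i` in the graph `E`. -/
def deg {n : ℕ} (E : Finset (Sym2 (Fin n))) (i : Fin n) : ℕ :=
  (E.filter (fun e => i ∈ e)).card

/-- `N(D)`: the number of graphs realising the (integer) degree sequence `D` over the set `A`
of allowable pairs. -/
def NA (n : ℕ) (A : Finset (Sym2 (Fin n))) (D : Fin n → ℤ) : ℕ :=
  ((Graphs n).filter (fun E => E ⊆ A ∧ ∀ i, (deg E i : ℤ) = D i)).card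

/-- `N_F(D)`: the number of graphs realising `D` over `A` that contain all edges of `F`. -/
def NAE (n : ℕ) (A : Finset (Sym2 (Fin n))) (F : Finset (Sym2 (Fin n))) (D : Fin n → ℤ) : ℕ :=
  ((Graphs n).filter (fun E => E ⊆ A ∧ F ⊆ E ∧ ∀ i, (deg E i : ℤ) = D i)).card

/-- `P_F(D) = N_F(D)/N(D)`: the probability that a uniformly random graph realising `D`
over `A` contains all edges of `F`. -/
def PA (n : ℕ) (A : Finset (Sym2 (Fin n))) (F : Finset (Sym2 (Fin n))) (D : Fin n → ℤ) : ℝ :=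
  (NAE n A F D : ℝ) / (NA n A D : ℝ)

/-- The `a`-th standard unit vector. -/
def eV {n : ℕ} (a : Fin n) : Fin n → ℤ := fun i => if i = a then 1 else 0

/-- `A(v)`: the allowable neighbourhood of `v`. -/
def nbhd (n : ℕ) (A : Finset (Sym2 (Fin n))) (v : Fin n) : Finset (Fin n) :=
  Finset.univ.filter (fun u => s(v, u) ∈ A)

/-- `R_{ab}(D) = N(D - e_a)/N(D - e_b)`. -/
def RA (n : ℕ) (A : Finset (Sym2 (Fin n))) (a b : Fin n) (D : Fin n → ℤ) : ℝ :=
  (NA n A (D - eV a) : ℝ) / (NA n A (D - eV b) : ℝ)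

/-!
Counting pairs (graph, edge at `v`) in two ways gives `∑_{b ∈ A(v)} N_{bv}(d) = d_v N(d)`, while
deleting the edge `bv` gives `N_{bv}(d) = N(d - e_b - e_v) (1 - P_{bv}(d - e_b - e_v))`. By the
latter each summand of the recursion is `N_{bv}(d) / N_{av}(d)`, and by the former the sum is
`d_v N(d) / N_{av}(d) = d_v / P_{av}(d)`.
-/

section

variable {n : ℕ} {A E F : Finset (Sym2 (Fin n))} {D : Fin n → ℤ} {e : Sym2 (Fin n)} {a b v : Fin n}

/-- The set `G_A(d)` of simple graphs with edges in `A` and degree sequence `D`, as edge sets. Its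
cardinality is `NA`; it lets graphs be manipulated before they are counted. -/
def realizations (A : Finset (Sym2 (Fin n))) (D : Fin n → ℤ) : Finset (Finset (Sym2 (Fin n))) :=
  {E ∈ Graphs n | E ⊆ A ∧ ∀ i, (deg E i : ℤ) = D i}

theorem mem_realizations :
    E ∈ realizations A D ↔ (∀ e ∈ E, ¬ e.IsDiag) ∧ E ⊆ A ∧ ∀ i, (deg E i : ℤ) = D i := by
  simp [realizations, Graphs]

theorem card_realizations (A : Finset (Sym2 (Fin n))) (D : Fin n → ℤ) :
    #(realizations A D) = NA n A D :=
  rfl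

theorem card_realizations_filter_subset (A F : Finset (Sym2 (Fin n))) (D : Fin n → ℤ) :
    #{E ∈ realizations A D | F ⊆ E} = NAE n A F D := by
  rw [realizations, filter_filter, NAE]
  refine congrArg card (filter_congr fun E _ ↦ ?_)
  tauto

theorem card_realizations_filter_mem (A : Finset (Sym2 (Fin n))) (e : Sym2 (Fin n))
    (D : Fin n → ℤ) : #{E ∈ realizations A D | e ∈ E} = NAE n A {e} D := by
  simp only [← card_realizations_filter_subset, singleton_subset_iff]

theorem NA_pos_of_NAE_pos (h : 0 < NAE n A F D) : 0 < NA n A D := by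
  rw [← card_realizations_filter_subset] at h
  exact h.trans_le (card_filter_le _ _)

theorem deg_pos (he : e ∈ E) (hv : v ∈ e) : 0 < deg E v :=
  card_pos.2 ⟨e, mem_filter.2 ⟨he, hv⟩⟩

theorem apply_pos_of_NAE_pos (hv : v ∈ e) (h : 0 < NAE n A {e} D) : 0 < D v := by
  rw [← card_realizations_filter_mem, card_pos] at h
  obtain ⟨E, hE⟩ := h
  obtain ⟨hED, heE⟩ := mem_filter.1 hE
  rw [← (mem_realizations.1 hED).2.2 v]
  exact_mod_cast deg_pos heE hv

theorem mem_nbhd_iff : b ∈ nbhd n A v ↔ s(b, v) ∈ A := by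
  simp [nbhd, Sym2.eq_swap]

theorem card_nbhd_filter_mem (hE : E ⊆ A) (v : Fin n) :
    #{b ∈ nbhd n A v | s(b, v) ∈ E} = deg E v := by
  refine card_bij (fun b _ ↦ s(b, v)) ?_ (fun _ _ _ _ ↦ Sym2.congr_left.1) ?_
  · intro b hb
    exact mem_filter.2 ⟨(mem_filter.1 hb).2, Sym2.mem_mk_right b v⟩
  · intro e he
    obtain ⟨heE, hve⟩ := mem_filter.1 he
    obtain ⟨b, rfl⟩ := hve
    rw [Sym2.eq_swap] at heE
    exact ⟨b, mem_filter.2 ⟨mem_nbhd_iff.2 (hE heE), heE⟩, Sym2.eq_swap⟩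

theorem sum_nbhd_NAE (A : Finset (Sym2 (Fin n))) (D : Fin n → ℤ) (v : Fin n) :
    ∑ b ∈ nbhd n A v, (NAE n A {s(b, v)} D : ℤ) = D v * NA n A D := by
  calc
    _ = ((∑ b ∈ nbhd n A v, #{E ∈ realizations A D | s(b, v) ∈ E} : ℕ) : ℤ) := by
      simp only [card_realizations_filter_mem, Nat.cast_sum]
    _ = ((∑ E ∈ realizations A D, #{b ∈ nbhd n A v | s(b, v) ∈ E} : ℕ) : ℤ) :=
      congrArg Nat.cast (sum_card_bipartiteAbove_eq_sum_card_bipartiteBelow fun b E ↦ s(b, v) ∈ E)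
    _ = ∑ _E ∈ realizations A D, D v := by
      rw [Nat.cast_sum]
      refine sum_congr rfl fun E hE ↦ ?_
      obtain ⟨-, hEA, hdeg⟩ := mem_realizations.1 hE
      rw [card_nbhd_filter_mem hEA, hdeg]
    _ = D v * NA n A D := by
      rw [sum_const, card_realizations, nsmul_eq_mul, mul_comm]

theorem deg_insert (he : e ∉ E) (i : Fin n) :
    deg (insert e E) i = deg E i + if i ∈ e then 1 else 0 := by
  unfold deg
  rw [filter_insert]
  split_ifs
  · exact card_insert_of_notMem fun h ↦ he (mem_filter.1 h).1
  · rfl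

theorem eV_add_eV_apply (hbv : b ≠ v) (i : Fin n) :
    eV b i + eV v i = if i ∈ s(b, v) then 1 else 0 := by
  grind [eV]

theorem insert_mem_realizations_iff (hbA : s(b, v) ∈ A) (hbv : b ≠ v) (hE : s(b, v) ∉ E) :
    insert s(b, v) E ∈ realizations A D ↔ E ∈ realizations A (D - eV b - eV v) := by
  have hdeg (i : Fin n) :
      (deg (insert s(b, v) E) i : ℤ) = D i ↔ (deg E i : ℤ) = (D - eV b - eV v) i := by
    have hsum := eV_add_eV_apply hbv i
    rw [deg_insert hE, Pi.sub_apply, Pi.sub_apply]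
    push_cast
    omega
  simp only [mem_realizations, forall_mem_insert, insert_subset_iff, hdeg, hbA,
    Sym2.mk_isDiag_iff, hbv, not_false_eq_true, true_and]

theorem card_realizations_sub_filter_notMem (hbA : s(b, v) ∈ A) (hbv : b ≠ v) (D : Fin n → ℤ) :
    #{E ∈ realizations A (D - eV b - eV v) | s(b, v) ∉ E} = NAE n A {s(b, v)} D := by
  rw [← card_realizations_filter_mem]
  refine card_bij' (fun E _ ↦ insert s(b, v) E) (fun E _ ↦ E.erase s(b, v)) ?_ ?_
    (fun E hE ↦ erase_insert (mem_filter.1 hE).2) (fun E hE ↦ insert_erase (mem_filter.1 hE).2)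
  · intro E hE
    obtain ⟨hED, hbvE⟩ := mem_filter.1 hE
    exact mem_filter.2
      ⟨(insert_mem_realizations_iff hbA hbv hbvE).2 hED, mem_insert_self _ _⟩
  · intro E hE
    obtain ⟨hED, hbvE⟩ := mem_filter.1 hE
    rw [← insert_erase hbvE] at hED
    have hbv_erase := notMem_erase s(b, v) E
    exact mem_filter.2 ⟨(insert_mem_realizations_iff hbA hbv hbv_erase).1 hED, hbv_erase⟩

theorem NA_mul_PA (A F : Finset (Sym2 (Fin n))) (D : Fin n → ℤ) :
    (NA n A D : ℝ) * PA n A F D = NAE n A F D := by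
  refine mul_div_cancel_of_imp' fun hNA ↦ ?_
  by_contra hNAE
  exact (NA_pos_of_NAE_pos (Nat.pos_of_ne_zero (mod_cast hNAE))).ne' (mod_cast hNA)

theorem NA_mul_one_sub_PA (hbA : s(b, v) ∈ A) (hbv : b ≠ v) (D : Fin n → ℤ) :
    (NA n A (D - eV b - eV v) : ℝ) * (1 - PA n A {s(b, v)} (D - eV b - eV v)) =
      NAE n A {s(b, v)} D := by
  have hsplit := card_filter_add_card_filter_not (s := realizations A (D - eV b - eV v))
    (s(b, v) ∈ ·)
  rw [card_realizations_filter_mem, card_realizations_sub_filter_notMem hbA hbv,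
    card_realizations] at hsplit
  rw [mul_sub, mul_one, NA_mul_PA, ← hsplit, Nat.cast_add, add_sub_cancel_left]

theorem RA_mul_one_sub_PA_div (haA : s(a, v) ∈ A) (hav : a ≠ v) (hbA : s(b, v) ∈ A)
    (hbv : b ≠ v) (D : Fin n → ℤ) :
    RA n A b a (D - eV v) * ((1 - PA n A {s(b, v)} (D - eV b - eV v)) /
        (1 - PA n A {s(a, v)} (D - eV a - eV v))) =
      (NAE n A {s(b, v)} D : ℝ) / NAE n A {s(a, v)} D := by
  rw [RA, sub_right_comm D, sub_right_comm D (eV v), div_mul_div_comm,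
    NA_mul_one_sub_PA hbA hbv, NA_mul_one_sub_PA haA hav]

theorem sum_RA_mul_one_sub_PA_div (hA : ∀ e ∈ A, ¬ e.IsDiag) (haA : s(a, v) ∈ A)
    (D : Fin n → ℤ) :
    ∑ b ∈ nbhd n A v with 0 < NAE n A {s(b, v)} D,
        RA n A b a (D - eV v) * ((1 - PA n A {s(b, v)} (D - eV b - eV v)) /
          (1 - PA n A {s(a, v)} (D - eV a - eV v))) =
      D v * NA n A D / NAE n A {s(a, v)} D := by
  have ne_of_mem {u : Fin n} (hu : s(u, v) ∈ A) : u ≠ v := fun h ↦ hA _ hu (Sym2.mk_isDiag_iff.2 h)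
  calc
    _ = ∑ b ∈ nbhd n A v with 0 < NAE n A {s(b, v)} D,
          (NAE n A {s(b, v)} D : ℝ) / NAE n A {s(a, v)} D := by
      refine sum_congr rfl fun b hb ↦ ?_
      have hbA := mem_nbhd_iff.1 (mem_filter.1 hb).1
      exact RA_mul_one_sub_PA_div haA (ne_of_mem haA) hbA (ne_of_mem hbA) D
    _ = (∑ b ∈ nbhd n A v, (NAE n A {s(b, v)} D : ℝ)) / NAE n A {s(a, v)} D := by
      rw [← sum_div, sum_filter_of_ne]
      exact fun b _ hb ↦ Nat.pos_of_ne_zero (mod_cast hb)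
    _ = D v * NA n A D / NAE n A {s(a, v)} D := by
      congr 1
      exact_mod_cast sum_nbhd_NAE A D v

end

/-- Recursive formula for the edge probability `P_{av}` (Proposition 3.1(a)). -/
theorem edge_probability_recursion (n : ℕ) (A : Finset (Sym2 (Fin n)))
    (hA : ∀ e ∈ A, ¬ e.IsDiag) (D : Fin n → ℤ) (hD : ∀ i, 0 ≤ D i)
    (a v : Fin n) (hav : s(a, v) ∈ A)
    (hpos : 0 < NAE n A {s(a, v)} D) :
    (∑ b ∈ (nbhd n A v).filter (fun b => 0 < NAE n A {s(b, v)} D),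
        RA n A b a (D - eV v) *
          ((1 - PA n A {s(b, v)} (D - eV b - eV v)) /
            (1 - PA n A {s(a, v)} (D - eV a - eV v)))) ≠ 0 ∧
      PA n A {s(a, v)} D =
        (D v : ℝ) *
          (∑ b ∈ (nbhd n A v).filter (fun b => 0 < NAE n A {s(b, v)} D),
            RA n A b a (D - eV v) *
              ((1 - PA n A {s(b, v)} (D - eV b - eV v)) /
                (1 - PA n A {s(a, v)} (D - eV a - eV v))))⁻¹ := by
  have hDv : (D v : ℝ) ≠ 0 := mod_cast (apply_pos_of_NAE_pos (Sym2.mem_mk_right a v) hpos).ne'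
  have hNA : (NA n A D : ℝ) ≠ 0 := mod_cast (NA_pos_of_NAE_pos hpos).ne'
  have hNAE : (NAE n A {s(a, v)} D : ℝ) ≠ 0 := mod_cast hpos.ne'
  rw [sum_RA_mul_one_sub_PA_div hA hav]
  refine ⟨div_ne_zero (mul_ne_zero hDv hNA) hNAE, ?_⟩
  rw [PA]
  field_simp
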